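/- There exists a constant C > 0 such that for all b, b' ∈ (0,1), sup_{n ≥ 0} |c_n(b,1) − c_n(b',1)| / (1+n) ≤ C |b − b'|. Consequently, for any fixed b_0 ∈ (0,1) and the sequence b_k = b_0 + 1/(k_0+k) < 1 (k ≥ 1, k_0 a fixed integer with b_0 + 1/k_0 < 1), the one-step potentials q_k = χ_{(0,b_k)}(|x|) satisfy ‖q_0 − q_k‖_{L^∞} = 1 for all k while sup_{n ≥ 0} |c_n(b_k,1) − c_n(b_0,1)| / (1+n) → 0 as k → ∞; thus no stability estimate ‖q_1−q_2‖_{L^∞} ≤ V(‖Λ_{q_1}−Λ_{q_2}‖) with V continuous and V(0)=0 can hold on the class of one-step radial potentials. -/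

import Mathlib

open Real Set MeasureTheory Filter

/-- Bessel function of the first kind of integer order, via the Poisson integral
representation. -/
noncomputable def besselJ (n : ℕ) (r : ℝ) : ℝ :=
  r ^ n / (2 ^ n * Real.Gamma ((n : ℝ) + 1 / 2) * Real.sqrt Real.pi) *
    ∫ t in (-1 : ℝ)..1, Real.cos (r * t) * (1 - t ^ 2) ^ ((n : ℝ) - 1 / 2)

/-- The eigenvalues `c_n(b,1)` of the Dirichlet-to-Neumann map for the one-step radial
potential `q = χ_{(0,b)}(|x|)` on the unit disk. -/
noncomputable def cEig (n : ℕ) (b : ℝ) : ℝ :=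
  if n = 0 then -(b * besselJ 1 b) / (b * Real.log b * besselJ 1 b + besselJ 0 b)
  else n * (besselJ (n - 1) b - b ^ (2 * n) * besselJ (n + 1) b) /
    (besselJ (n - 1) b + b ^ (2 * n) * besselJ (n + 1) b)

/-- The one-step radial potential `q(x) = χ_{(0,b)}(|x|)` on the plane. -/
noncomputable def stepPot (b : ℝ) : EuclideanSpace ℝ (Fin 2) → ℝ :=
  Set.indicator (Metric.ball 0 b) fun _ => 1

/-!
Write `W p r = ∫ cos (r t) (1 - t²)^p` over `(-1, 1)`. For `|r| ≤ 1` the cosine is at least `1/2`,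
so `W p` and `W q` have no zeros and, for `q ≤ p`, the quotient `R = W p / W q` takes values in
`[0, 1]` and is Lipschitz with a constant independent of `p` and `q`. By the Poisson
representation `J_{n+1}(r) / J_n(r)` is `r / (2n + 1)` times such a quotient. Hence
`c_n = n (1 - x) / (1 + x)` for `n ≥ 1`, where `x = b^{2n} J_{n+1}(b) / J_{n-1}(b) ≥ 0` is
Lipschitz in `b` uniformly in `n`: the exponent `2n + 2` of `b` in `x` is beaten by the
denominator `(2n - 1) (2n + 1)`. For `n = 0` one has `c_0 = -y / (1 + y log b)` with `0 ≤ y ≤ b²`,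
and the factor `y` absorbs the singularity of the logarithm. The eigenvalues are therefore close
whenever the radii are, although the potentials stay at `L^∞` distance `1`.
-/

/-- The integral `∫ cos (r t) (1 - t²)^p` over `(-1, 1)` in Poisson's representation of the Bessel
functions; `p = n - 1/2` gives `J_n` up to an elementary factor. -/
noncomputable def besselIntegral (p r : ℝ) : ℝ :=
  ∫ t in (-1 : ℝ)..1, cos (r * t) * (1 - t ^ 2) ^ p

/-- The quotient of two Poisson integrals, through which quotients of Bessel functions are
expressed. -/
noncomputable def besselRatio (p q r : ℝ) : ℝ :=
  besselIntegral p r / besselIntegral q r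

section PoissonIntegral

variable {p q r s t : ℝ}

lemma one_sub_sq_pos (ht : t ∈ Ioo (-1 : ℝ) 1) : 0 < 1 - t ^ 2 := by
  nlinarith [ht.1, ht.2]

lemma one_sub_sq_rpow_pos (p : ℝ) (ht : t ∈ Ioo (-1 : ℝ) 1) : 0 < (1 - t ^ 2) ^ p :=
  rpow_pos_of_pos (one_sub_sq_pos ht) p

lemma one_half_le_cos (hr : |r| ≤ 1) : 1 / 2 ≤ cos r := by
  linarith [one_sub_sq_div_two_le_cos (x := r), (sq_le_one_iff_abs_le_one r).2 hr]

lemma one_half_le_cos_mul (hr : |r| ≤ 1) (ht : t ∈ Ioo (-1 : ℝ) 1) : 1 / 2 ≤ cos (r * t) :=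
  one_half_le_cos <| by
    rw [abs_mul]
    exact mul_le_one₀ hr (abs_nonneg t) (abs_le.2 ⟨ht.1.le, ht.2.le⟩)

lemma intervalIntegrable_one_sub_sq_rpow_zero_one (hp : -1 < p) :
    IntervalIntegrable (fun t : ℝ ↦ (1 - t ^ 2) ^ p) volume 0 1 := by
  have h_singular : IntervalIntegrable (fun t : ℝ ↦ (1 - t) ^ p) volume 0 1 := by
    simpa using ((intervalIntegral.intervalIntegrable_rpow' (a := 0) (b := 1) hp).comp_sub_left
      1).symm
  have h_regular : ContinuousOn (fun t : ℝ ↦ (1 + t) ^ p) (uIcc 0 1) := by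
    refine ContinuousOn.rpow_const (by fun_prop) fun t ht ↦ Or.inl ?_
    rw [uIcc_of_le zero_le_one] at ht
    linarith [ht.1]
  refine (h_singular.continuousOn_mul h_regular).congr fun t ht ↦ ?_
  rw [uIoc_of_le zero_le_one] at ht
  rw [← mul_rpow (by linarith [ht.1]) (by linarith [ht.2])]
  ring_nf

lemma intervalIntegrable_one_sub_sq_rpow (hp : -1 < p) :
    IntervalIntegrable (fun t : ℝ ↦ (1 - t ^ 2) ^ p) volume (-1) 1 := by
  have h_right := intervalIntegrable_one_sub_sq_rpow_zero_one hp
  have h_left : IntervalIntegrable (fun t : ℝ ↦ (1 - t ^ 2) ^ p) volume (-1) 0 := by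
    simpa using (h_right.comp_sub_left 0).symm
  exact h_left.trans h_right

lemma intervalIntegrable_cos_mul_one_sub_sq_rpow (hp : -1 < p) (r : ℝ) :
    IntervalIntegrable (fun t : ℝ ↦ cos (r * t) * (1 - t ^ 2) ^ p) volume (-1) 1 :=
  (intervalIntegrable_one_sub_sq_rpow hp).continuousOn_mul (by fun_prop)

lemma besselIntegral_pos (hp : -1 < p) (hr : |r| ≤ 1) : 0 < besselIntegral p r := by
  refine intervalIntegral.intervalIntegral_pos_of_pos_on
    (intervalIntegrable_cos_mul_one_sub_sq_rpow hp r) (fun t ht ↦ ?_) (by norm_num)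
  exact mul_pos (one_half_pos.trans_le (one_half_le_cos_mul hr ht)) (one_sub_sq_rpow_pos p ht)

lemma besselIntegral_zero_le_two_mul (hp : -1 < p) (hr : |r| ≤ 1) :
    besselIntegral p 0 ≤ 2 * besselIntegral p r := by
  unfold besselIntegral
  rw [← intervalIntegral.integral_const_mul]
  refine intervalIntegral.integral_mono_on_of_le_Ioo (by norm_num)
    (intervalIntegrable_cos_mul_one_sub_sq_rpow hp 0)
    ((intervalIntegrable_cos_mul_one_sub_sq_rpow hp r).const_mul 2) fun t ht ↦ ?_
  rw [zero_mul, cos_zero, ← mul_assoc]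
  exact mul_le_mul_of_nonneg_right (by linarith [one_half_le_cos_mul hr ht])
    (one_sub_sq_rpow_pos p ht).le

lemma besselIntegral_anti (hq : -1 < q) (hqp : q ≤ p) (hr : |r| ≤ 1) :
    besselIntegral p r ≤ besselIntegral q r := by
  refine intervalIntegral.integral_mono_on_of_le_Ioo (by norm_num)
    (intervalIntegrable_cos_mul_one_sub_sq_rpow (hq.trans_le hqp) r)
    (intervalIntegrable_cos_mul_one_sub_sq_rpow hq r) fun t ht ↦ ?_
  exact mul_le_mul_of_nonneg_left
    (rpow_le_rpow_of_exponent_ge (one_sub_sq_pos ht) (by linarith [sq_nonneg t]) hqp)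
    (one_half_pos.le.trans (one_half_le_cos_mul hr ht))

lemma abs_besselIntegral_sub_le (hp : -1 < p) (r s : ℝ) :
    |besselIntegral p r - besselIntegral p s| ≤ |r - s| * besselIntegral p 0 := by
  have h_int := intervalIntegrable_cos_mul_one_sub_sq_rpow hp
  unfold besselIntegral
  rw [← intervalIntegral.integral_sub (h_int r) (h_int s), ← intervalIntegral.integral_const_mul]
  refine (intervalIntegral.abs_integral_le_integral_abs (by norm_num)).trans <|
    intervalIntegral.integral_mono_on_of_le_Ioo (by norm_num) ((h_int r).sub (h_int s)).abs
      ((h_int 0).const_mul _) fun t ht ↦ ?_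
  have h_cos : |cos (r * t) - cos (s * t)| ≤ |r - s| :=
    calc |cos (r * t) - cos (s * t)| ≤ |r * t - s * t| := abs_cos_sub_cos_le _ _
      _ = |r - s| * |t| := by rw [← sub_mul, abs_mul]
      _ ≤ |r - s| := mul_le_of_le_one_right (abs_nonneg _) (abs_le.2 ⟨ht.1.le, ht.2.le⟩)
  rw [zero_mul, cos_zero, one_mul, ← sub_mul, abs_mul, abs_of_pos (one_sub_sq_rpow_pos p ht)]
  exact mul_le_mul_of_nonneg_right h_cos (one_sub_sq_rpow_pos p ht).le

lemma besselRatio_mem_Icc (hq : -1 < q) (hqp : q ≤ p) (hr : |r| ≤ 1) :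
    besselRatio p q r ∈ Icc 0 1 :=
  ⟨div_nonneg (besselIntegral_pos (hq.trans_le hqp) hr).le (besselIntegral_pos hq hr).le,
    div_le_one_of_le₀ (besselIntegral_anti hq hqp hr) (besselIntegral_pos hq hr).le⟩

lemma abs_besselRatio_sub_le (hq : -1 < q) (hqp : q ≤ p) (hr : |r| ≤ 1) (hs : |s| ≤ 1) :
    |besselRatio p q r - besselRatio p q s| ≤ 4 * |r - s| := by
  have hWr : 0 < besselIntegral q r := besselIntegral_pos hq hr
  have hWs : 0 < besselIntegral q s := besselIntegral_pos hq hs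
  obtain ⟨hR_nonneg, hR_le_one⟩ := besselRatio_mem_Icc hq hqp hs
  have h_zero : besselIntegral p 0 ≤ besselIntegral q 0 :=
    besselIntegral_anti hq hqp (by simp)
  have h_diff : besselRatio p q r - besselRatio p q s =
      ((besselIntegral p r - besselIntegral p s) -
        besselRatio p q s * (besselIntegral q r - besselIntegral q s)) / besselIntegral q r := by
    unfold besselRatio
    field_simp
    ring
  rw [h_diff, abs_div, abs_of_pos hWr, div_le_iff₀ hWr]
  calc |(besselIntegral p r - besselIntegral p s) -
        besselRatio p q s * (besselIntegral q r - besselIntegral q s)|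
      ≤ |besselIntegral p r - besselIntegral p s| +
        besselRatio p q s * |besselIntegral q r - besselIntegral q s| := by
        rw [← abs_of_nonneg hR_nonneg, ← abs_mul, abs_of_nonneg hR_nonneg]
        exact abs_sub _ _
    _ ≤ |besselIntegral p r - besselIntegral p s| +
        |besselIntegral q r - besselIntegral q s| := by
        gcongr
        exact mul_le_of_le_one_left (abs_nonneg _) hR_le_one
    _ ≤ |r - s| * besselIntegral q 0 + |r - s| * besselIntegral q 0 := by
        gcongr
        · exact (abs_besselIntegral_sub_le (hq.trans_le hqp) r s).trans (by gcongr)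
        · exact abs_besselIntegral_sub_le hq r s
    _ ≤ |r - s| * (2 * besselIntegral q r) + |r - s| * (2 * besselIntegral q r) := by
        gcongr <;> exact besselIntegral_zero_le_two_mul hq hr
    _ = 4 * |r - s| * besselIntegral q r := by ring

lemma abs_pow_sub_pow_le_of_abs_le_one (N : ℕ) (hr : |r| ≤ 1) (hs : |s| ≤ 1) :
    |r ^ N - s ^ N| ≤ N * |r - s| :=
  calc |r ^ N - s ^ N| ≤ |r - s| * N * max |r| |s| ^ (N - 1) := abs_pow_sub_pow_le r s N
    _ ≤ |r - s| * N :=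
        mul_le_of_le_one_right (by positivity) (pow_le_one₀ (by positivity) (max_le hr hs))
    _ = N * |r - s| := mul_comm _ _

lemma abs_pow_mul_besselRatio_sub_le (N : ℕ) (hq : -1 < q) (hqp : q ≤ p) (hr : |r| ≤ 1)
    (hs : |s| ≤ 1) :
    |r ^ N * besselRatio p q r - s ^ N * besselRatio p q s| ≤ (N + 4) * |r - s| := by
  obtain ⟨hR_nonneg, hR_le_one⟩ := besselRatio_mem_Icc hq hqp hr
  calc |r ^ N * besselRatio p q r - s ^ N * besselRatio p q s|
      = |(r ^ N - s ^ N) * besselRatio p q r +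
          s ^ N * (besselRatio p q r - besselRatio p q s)| := by ring_nf
    _ ≤ |r ^ N - s ^ N| * |besselRatio p q r| +
          |s ^ N| * |besselRatio p q r - besselRatio p q s| := by
        rw [← abs_mul, ← abs_mul]
        exact abs_add_le _ _
    _ ≤ |r ^ N - s ^ N| * 1 + 1 * |besselRatio p q r - besselRatio p q s| := by
        gcongr
        · rwa [abs_of_nonneg hR_nonneg]
        · rw [abs_pow]
          exact pow_le_one₀ (abs_nonneg s) hs
    _ ≤ N * |r - s| * 1 + 1 * (4 * |r - s|) := by
        gcongr
        · exact abs_pow_sub_pow_le_of_abs_le_one N hr hs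
        · exact abs_besselRatio_sub_le hq hqp hr hs
    _ = (N + 4) * |r - s| := by ring

end PoissonIntegral

section BesselQuotient

variable {r : ℝ}

lemma abs_le_one_of_mem_Ioc (hr : r ∈ Ioc (0 : ℝ) 1) : |r| ≤ 1 :=
  abs_le.2 ⟨by linarith [hr.1], hr.2⟩

lemma neg_one_lt_natCast_sub_half (n : ℕ) : (-1 : ℝ) < n - 1 / 2 := by
  linarith [n.cast_nonneg (α := ℝ)]

lemma besselJ_eq_besselIntegral (n : ℕ) (r : ℝ) :
    besselJ n r = r ^ n / (2 ^ n * Gamma (n + 1 / 2) * √π) * besselIntegral (n - 1 / 2) r :=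
  rfl

lemma besselJ_pos (n : ℕ) (hr : r ∈ Ioc (0 : ℝ) 1) : 0 < besselJ n r := by
  have hr₀ : 0 < r := hr.1
  have hW : 0 < besselIntegral (n - 1 / 2) r :=
    besselIntegral_pos (neg_one_lt_natCast_sub_half n) (abs_le_one_of_mem_Ioc hr)
  rw [besselJ_eq_besselIntegral]
  positivity

lemma besselJ_succ_div (n : ℕ) (hr : r ≠ 0) :
    besselJ (n + 1) r / besselJ n r = r / (2 * n + 1) * besselRatio (n + 1 / 2) (n - 1 / 2) r := by
  have h_succ : ((n + 1 : ℕ) : ℝ) + 1 / 2 = n + 1 / 2 + 1 := by push_cast; ring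
  have h_pred : ((n + 1 : ℕ) : ℝ) - 1 / 2 = n + 1 / 2 := by push_cast; ring
  have hn : (n + 1 / 2 : ℝ) ≠ 0 := by positivity
  rw [besselJ_eq_besselIntegral, besselJ_eq_besselIntegral, h_succ, h_pred, Gamma_add_one hn,
    besselRatio]
  generalize besselIntegral (n + 1 / 2) r = W₁
  generalize besselIntegral (n - 1 / 2) r = W₀
  field_simp
  ring

lemma besselJ_add_two_div (n : ℕ) (hr : r ∈ Ioc (0 : ℝ) 1) :
    besselJ (n + 2) r / besselJ n r =
      r ^ 2 / ((2 * n + 1) * (2 * n + 3)) * besselRatio (n + 3 / 2) (n - 1 / 2) r := by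
  have h_second := besselJ_succ_div (n + 1) hr.1.ne'
  rw [show ((n + 1 : ℕ) : ℝ) + 1 / 2 = n + 3 / 2 by push_cast; ring,
    show ((n + 1 : ℕ) : ℝ) - 1 / 2 = n + 1 / 2 by push_cast; ring] at h_second
  have hW : besselIntegral (n + 1 / 2) r ≠ 0 :=
    (besselIntegral_pos (by linarith [n.cast_nonneg (α := ℝ)]) (abs_le_one_of_mem_Ioc hr)).ne'
  have h_telescope : besselRatio (n + 3 / 2) (n + 1 / 2) r * besselRatio (n + 1 / 2) (n - 1 / 2) r =
      besselRatio (n + 3 / 2) (n - 1 / 2) r := div_mul_div_cancel₀ hW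
  rw [← div_mul_div_cancel₀ (besselJ_pos (n + 1) hr).ne', h_second,
    besselJ_succ_div n hr.1.ne', mul_mul_mul_comm, h_telescope]
  push_cast
  field_simp
  ring

end BesselQuotient

/-- The quotient of Bessel functions through which the eigenvalue `c_n(b, 1)` depends on `b`:
`b J₁(b) / J₀(b)` for `n = 0`, and `b^{2n} J_{n+1}(b) / J_{n-1}(b)` for `n ≥ 1`. -/
noncomputable def dnQuotient : ℕ → ℝ → ℝ
  | 0, b => b * (besselJ 1 b / besselJ 0 b)
  | n + 1, b => b ^ (2 * (n + 1)) * (besselJ (n + 2) b / besselJ n b)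

section Eigenvalues

variable {b b' x x' y y' : ℝ}

lemma dnQuotient_zero (hb : b ∈ Ioc (0 : ℝ) 1) :
    dnQuotient 0 b = b ^ 2 * besselRatio (1 / 2) (-(1 / 2)) b := by
  have h := besselJ_succ_div 0 hb.1.ne'
  norm_num only [Nat.cast_zero] at h
  rw [dnQuotient, h]
  ring_nf

lemma dnQuotient_succ (n : ℕ) (hb : b ∈ Ioc (0 : ℝ) 1) :
    dnQuotient (n + 1) b =
      b ^ (2 * n + 4) * besselRatio (n + 3 / 2) (n - 1 / 2) b / ((2 * n + 1) * (2 * n + 3)) := by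
  rw [dnQuotient, besselJ_add_two_div n hb]
  ring

lemma dnQuotient_zero_mem_Icc (hb : b ∈ Ioc (0 : ℝ) 1) : dnQuotient 0 b ∈ Icc 0 (b ^ 2) := by
  obtain ⟨hR_nonneg, hR_le_one⟩ := besselRatio_mem_Icc (p := 1 / 2) (q := -(1 / 2)) (by norm_num)
    (by norm_num) (abs_le_one_of_mem_Ioc hb)
  rw [dnQuotient_zero hb]
  exact ⟨by positivity, mul_le_of_le_one_right (sq_nonneg b) hR_le_one⟩

lemma dnQuotient_succ_nonneg (n : ℕ) (hb : b ∈ Ioc (0 : ℝ) 1) : 0 ≤ dnQuotient (n + 1) b :=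
  mul_nonneg (pow_nonneg hb.1.le _)
    (div_nonneg (besselJ_pos (n + 2) hb).le (besselJ_pos n hb).le)

lemma abs_dnQuotient_zero_sub_le (hb : b ∈ Ioc (0 : ℝ) 1) (hb' : b' ∈ Ioc (0 : ℝ) 1) :
    |dnQuotient 0 b - dnQuotient 0 b'| ≤ 6 * |b - b'| := by
  rw [dnQuotient_zero hb, dnQuotient_zero hb']
  refine (abs_pow_mul_besselRatio_sub_le 2 (by norm_num) (by norm_num) (abs_le_one_of_mem_Ioc hb)
    (abs_le_one_of_mem_Ioc hb')).trans_eq ?_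
  norm_num

lemma abs_dnQuotient_succ_sub_le (n : ℕ) (hb : b ∈ Ioc (0 : ℝ) 1) (hb' : b' ∈ Ioc (0 : ℝ) 1) :
    |dnQuotient (n + 1) b - dnQuotient (n + 1) b'| ≤ 3 * |b - b'| := by
  have h_denom : (0 : ℝ) < (2 * n + 1) * (2 * n + 3) := by positivity
  rw [dnQuotient_succ n hb, dnQuotient_succ n hb', ← sub_div, abs_div, abs_of_pos h_denom,
    div_le_iff₀ h_denom]
  calc _ ≤ ((2 * n + 4 : ℕ) + 4) * |b - b'| :=
        abs_pow_mul_besselRatio_sub_le _ (neg_one_lt_natCast_sub_half n) (by linarith)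
          (abs_le_one_of_mem_Ioc hb) (abs_le_one_of_mem_Ioc hb')
    _ ≤ 3 * ((2 * n + 1) * (2 * n + 3)) * |b - b'| := by
        gcongr
        push_cast
        nlinarith [n.cast_nonneg (α := ℝ)]
    _ = 3 * |b - b'| * ((2 * n + 1) * (2 * n + 3)) := by ring

lemma cEig_zero (hb : b ∈ Ioc (0 : ℝ) 1) :
    cEig 0 b = -(dnQuotient 0 b / (1 + dnQuotient 0 b * log b)) := by
  have hJ := (besselJ_pos 0 hb).ne'
  have h_num : b * besselJ 1 b = besselJ 0 b * dnQuotient 0 b := by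
    rw [dnQuotient]
    field_simp
  have h_denom : b * log b * besselJ 1 b + besselJ 0 b =
      besselJ 0 b * (1 + dnQuotient 0 b * log b) := by
    linear_combination log b * h_num
  rw [cEig, if_pos rfl, h_num, h_denom, neg_div, mul_div_mul_left _ _ hJ]

lemma cEig_succ (n : ℕ) (hb : b ∈ Ioc (0 : ℝ) 1) :
    cEig (n + 1) b = (n + 1) * ((1 - dnQuotient (n + 1) b) / (1 + dnQuotient (n + 1) b)) := by
  have hJ := (besselJ_pos n hb).ne'
  have h_term : b ^ (2 * (n + 1)) * besselJ (n + 2) b = besselJ n b * dnQuotient (n + 1) b := by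
    rw [dnQuotient]
    field_simp
  rw [cEig, if_neg n.succ_ne_zero, Nat.add_sub_cancel, h_term, ← mul_one_sub, ← mul_one_add,
    mul_div_assoc, mul_div_mul_left _ _ hJ, Nat.cast_succ]

lemma abs_one_sub_div_one_add_sub_le (hx : 0 ≤ x) (hx' : 0 ≤ x') :
    |(1 - x) / (1 + x) - (1 - x') / (1 + x')| ≤ 2 * |x - x'| := by
  have h_diff : (1 - x) / (1 + x) - (1 - x') / (1 + x') =
      -(2 * (x - x')) / ((1 + x) * (1 + x')) := by
    field_simp
    ring
  have h_denom : 1 ≤ (1 + x) * (1 + x') :=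
    one_le_mul_of_one_le_of_one_le (by linarith) (by linarith)
  rw [h_diff, abs_div, abs_neg, abs_mul, abs_two, abs_of_pos (one_pos.trans_le h_denom)]
  exact div_le_self (by positivity) h_denom

lemma min_mul_abs_log_sub_log_le (hx : 0 < x) (hy : 0 < y) :
    min x y * |log x - log y| ≤ |x - y| := by
  wlog h : x ≤ y generalizing x y
  · rw [min_comm, abs_sub_comm, abs_sub_comm x]
    exact this hy hx (le_of_not_ge h)
  have h_log : log x ≤ log y := log_le_log hx h
  rw [min_eq_left h, abs_sub_comm, abs_of_nonneg (sub_nonneg.2 h_log), abs_sub_comm,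
    abs_of_nonneg (sub_nonneg.2 h), ← log_div hy.ne' hx.ne']
  calc x * log (y / x) ≤ x * (y / x - 1) := by gcongr; exact log_le_sub_one_of_pos (by positivity)
    _ = y - x := by field_simp

lemma three_quarters_le_one_add_mul_log (hb : b ∈ Ioc (0 : ℝ) 1) (hy : y ∈ Icc 0 (b ^ 2)) :
    3 / 4 ≤ 1 + y * log b := by
  have h_sq : b ^ 2 * log b ≤ y * log b :=
    mul_le_mul_of_nonpos_right hy.2 (log_nonpos hb.1.le hb.2)
  have h_log : b * (b - 1) ≤ b * (b * log b) :=
    mul_le_mul_of_nonneg_left (self_sub_one_le_mul_log hb.1.le) hb.1.le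
  linarith [sq_nonneg (b - 1 / 2)]

lemma mul_mul_abs_log_sub_log_le (hb : b ∈ Ioc (0 : ℝ) 1) (hb' : b' ∈ Ioc (0 : ℝ) 1)
    (hy : y ∈ Icc 0 (b ^ 2)) (hy' : y' ∈ Icc 0 (b' ^ 2)) :
    y * y' * |log b - log b'| ≤ |b - b'| := by
  have hyb : y ≤ b := hy.2.trans (pow_le_of_le_one hb.1.le hb.2 two_ne_zero)
  have hyb' : y' ≤ b' := hy'.2.trans (pow_le_of_le_one hb'.1.le hb'.2 two_ne_zero)
  have h_min : y * y' ≤ min b b' := le_min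
    ((mul_le_of_le_one_right hy.1 (hyb'.trans hb'.2)).trans hyb)
    ((mul_le_of_le_one_left hy'.1 (hyb.trans hb.2)).trans hyb')
  exact (mul_le_mul_of_nonneg_right h_min (abs_nonneg _)).trans
    (min_mul_abs_log_sub_log_le hb.1 hb'.1)

lemma abs_div_one_add_mul_log_sub_le (hb : b ∈ Ioc (0 : ℝ) 1) (hb' : b' ∈ Ioc (0 : ℝ) 1)
    (hy : y ∈ Icc 0 (b ^ 2)) (hy' : y' ∈ Icc 0 (b' ^ 2)) :
    |y / (1 + y * log b) - y' / (1 + y' * log b')| ≤ 16 / 9 * (|y - y'| + |b - b'|) := by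
  have hD := three_quarters_le_one_add_mul_log hb hy
  have hD' := three_quarters_le_one_add_mul_log hb' hy'
  have h_denom : 9 / 16 ≤ (1 + y * log b) * (1 + y' * log b') := by nlinarith
  have h_diff : y / (1 + y * log b) - y' / (1 + y' * log b') =
      ((y - y') - y * y' * (log b - log b')) / ((1 + y * log b) * (1 + y' * log b')) := by
    rw [div_sub_div _ _ (by linarith) (by linarith)]
    ring_nf
  have h_num : |(y - y') - y * y' * (log b - log b')| ≤ |y - y'| + |b - b'| :=
    calc |(y - y') - y * y' * (log b - log b')|
        ≤ |y - y'| + |y * y' * (log b - log b')| := abs_sub _ _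
      _ = |y - y'| + y * y' * |log b - log b'| := by
          rw [abs_mul, abs_of_nonneg (mul_nonneg hy.1 hy'.1)]
      _ ≤ |y - y'| + |b - b'| := by gcongr; exact mul_mul_abs_log_sub_log_le hb hb' hy hy'
  rw [h_diff, abs_div, abs_of_pos (by linarith : 0 < (1 + y * log b) * (1 + y' * log b')),
    div_le_iff₀ (by linarith)]
  have h_sum : 0 ≤ |y - y'| + |b - b'| := by positivity
  nlinarith

lemma abs_cEig_zero_sub_le (hb : b ∈ Ioc (0 : ℝ) 1) (hb' : b' ∈ Ioc (0 : ℝ) 1) :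
    |cEig 0 b - cEig 0 b'| ≤ 13 * |b - b'| := by
  rw [cEig_zero hb, cEig_zero hb', neg_sub_neg, abs_sub_comm]
  refine (abs_div_one_add_mul_log_sub_le hb hb' (dnQuotient_zero_mem_Icc hb)
    (dnQuotient_zero_mem_Icc hb')).trans ?_
  linarith [abs_dnQuotient_zero_sub_le hb hb', abs_nonneg (b - b')]

lemma abs_cEig_succ_sub_le (n : ℕ) (hb : b ∈ Ioc (0 : ℝ) 1) (hb' : b' ∈ Ioc (0 : ℝ) 1) :
    |cEig (n + 1) b - cEig (n + 1) b'| ≤ 6 * |b - b'| * (n + 1) := by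
  rw [cEig_succ n hb, cEig_succ n hb', ← mul_sub, abs_mul, abs_of_pos (by positivity), mul_comm]
  gcongr
  refine (abs_one_sub_div_one_add_sub_le (dnQuotient_succ_nonneg n hb)
    (dnQuotient_succ_nonneg n hb')).trans ?_
  linarith [abs_dnQuotient_succ_sub_le n hb hb']

theorem abs_cEig_sub_div_le (n : ℕ) (hb : b ∈ Ioc (0 : ℝ) 1) (hb' : b' ∈ Ioc (0 : ℝ) 1) :
    |cEig n b - cEig n b'| / (1 + n) ≤ 13 * |b - b'| := by
  rw [div_le_iff₀ (by positivity)]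
  cases n with
  | zero => simpa using abs_cEig_zero_sub_le hb hb'
  | succ n =>
    refine (abs_cEig_succ_sub_le n hb hb').trans ?_
    push_cast
    nlinarith [abs_nonneg (b - b'), n.cast_nonneg (α := ℝ)]

end Eigenvalues

/-- The distance `sup_n |c_n(b, 1) - c_n(b', 1)| / (1 + n)` between the Dirichlet-to-Neumann maps of
two one-step potentials, comparable to the norm of their difference from `H^{1/2}` to `H^{-1/2}`. -/
noncomputable def dnDist (b b' : ℝ) : ℝ :=
  ⨆ n : ℕ, |cEig n b - cEig n b'| / (1 + n)

lemma dnDist_le {b b' : ℝ} (hb : b ∈ Ioc (0 : ℝ) 1) (hb' : b' ∈ Ioc (0 : ℝ) 1) :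
    dnDist b b' ≤ 13 * |b - b'| :=
  ciSup_le fun n ↦ abs_cEig_sub_div_le n hb hb'

lemma dnDist_nonneg (b b' : ℝ) : 0 ≤ dnDist b b' :=
  iSup_nonneg fun n ↦ by positivity

theorem tendsto_dnDist_nhds {b₀ : ℝ} (hb₀ : b₀ ∈ Ioo (0 : ℝ) 1) :
    Tendsto (fun b ↦ dnDist b b₀) (nhds b₀) (nhds 0) := by
  have h_bound : Tendsto (fun b ↦ 13 * |b - b₀|) (nhds b₀) (nhds 0) :=
    (by fun_prop : Continuous fun b ↦ 13 * |b - b₀|).tendsto' _ _ (by simp)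
  refine squeeze_zero' (Eventually.of_forall fun b ↦ dnDist_nonneg b b₀) ?_ h_bound
  filter_upwards [Ioo_mem_nhds hb₀.1 hb₀.2] with b hb
  exact dnDist_le (Ioo_subset_Ioc_self hb) (Ioo_subset_Ioc_self hb₀)

lemma measure_ball_diff_ball_ne_zero {E : Type*} [NormedAddCommGroup E] [NormedSpace ℝ E]
    [Nontrivial E] [MeasurableSpace E] (μ : Measure E) [μ.IsOpenPosMeasure] (c : E) {r s : ℝ}
    (hs : 0 < s) (hrs : r < s) : μ (Metric.ball c s \ Metric.ball c r) ≠ 0 := by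
  obtain ⟨ρ, hρ, hρs⟩ := exists_between (max_lt hrs hs)
  obtain ⟨hrρ, hρ₀⟩ := max_lt_iff.1 hρ
  obtain ⟨v, hv⟩ := exists_norm_eq E hρ₀.le
  have h_open : IsOpen (Metric.ball c s \ Metric.closedBall c r) :=
    Metric.isOpen_ball.sdiff Metric.isClosed_closedBall
  have h_mem : c + v ∈ Metric.ball c s \ Metric.closedBall c r := by
    simp [hv, hρs, hrρ]
  exact (measure_pos_of_superset (sdiff_subset_sdiff_right Metric.ball_subset_closedBall)
    (h_open.measure_ne_zero μ ⟨_, h_mem⟩)).ne'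

theorem eLpNorm_top_stepPot_sub {b b' : ℝ} (hb' : 0 < b') (h : b < b') :
    eLpNorm (stepPot b - stepPot b') ⊤ volume = 1 := by
  have h_indicator : stepPot b' - stepPot b =
      (Metric.ball 0 b' \ Metric.ball 0 b).indicator fun _ ↦ (1 : ℝ) :=
    (indicator_sdiff' (Metric.ball_subset_ball h.le) _).symm
  rw [eLpNorm_sub_comm, h_indicator, eLpNorm_exponent_top,
    eLpNormEssSup_indicator_const_eq _ _ (measure_ball_diff_ball_ne_zero volume 0 hb' h), enorm_one]

theorem exists_ne_comp_dnDist_lt {b₀ ε : ℝ} (hb₀ : b₀ ∈ Ioo (0 : ℝ) 1) {V : ℝ → ℝ}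
    (hV : ContinuousAt V 0) (hε : V 0 < ε) :
    ∃ b ∈ Ioo (0 : ℝ) 1, b ≠ b₀ ∧ V (dnDist b b₀) < ε := by
  have h_lt : ∀ᶠ b in nhds b₀, V (dnDist b b₀) < ε :=
    (hV.tendsto.comp (tendsto_dnDist_nhds hb₀)).eventually_lt_const hε
  have h_mem : ∀ᶠ b in nhds b₀, b ∈ Ioo (0 : ℝ) 1 := Ioo_mem_nhds hb₀.1 hb₀.2
  have h_ne : ∀ᶠ b in nhdsWithin b₀ {b₀}ᶜ, b ≠ b₀ := self_mem_nhdsWithin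
  obtain ⟨b, ⟨hb, hlt⟩, hne⟩ :=
    (((h_mem.and h_lt).filter_mono nhdsWithin_le_nhds).and h_ne).exists
  exact ⟨b, hb, hne, hlt⟩

lemma tendsto_add_one_div_add_natCast (a c : ℝ) :
    Tendsto (fun k : ℕ ↦ a + 1 / (c + k)) atTop (nhds a) := by
  have h_atTop : Tendsto (fun k : ℕ ↦ c + k) atTop atTop :=
    tendsto_atTop_add_const_left _ _ tendsto_natCast_atTop_atTop
  simpa using h_atTop.inv_tendsto_atTop.const_add a

theorem no_stability_estimate :
    (∃ C > 0, ∀ b ∈ Set.Ioo (0 : ℝ) 1, ∀ b' ∈ Set.Ioo (0 : ℝ) 1, ∀ n : ℕ,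
        |cEig n b - cEig n b'| / (1 + n) ≤ C * |b - b'|) ∧
    (∀ b₀ ∈ Set.Ioo (0 : ℝ) 1, ∀ k₀ : ℕ, 1 ≤ k₀ → b₀ + 1 / (k₀ : ℝ) < 1 →
      (∀ k : ℕ, 1 ≤ k →
          eLpNorm (stepPot b₀ - stepPot (b₀ + 1 / ((k₀ : ℝ) + k))) ⊤ volume = 1) ∧
        Filter.Tendsto
          (fun k : ℕ => ⨆ n : ℕ, |cEig n (b₀ + 1 / ((k₀ : ℝ) + k)) - cEig n b₀| / (1 + n))
          Filter.atTop (nhds 0)) ∧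
    ¬ ∃ V : ℝ → ℝ, Continuous V ∧ V 0 = 0 ∧
        ∀ b ∈ Set.Ioo (0 : ℝ) 1, ∀ b' ∈ Set.Ioo (0 : ℝ) 1, b ≠ b' →
          (1 : ℝ) ≤ V (⨆ n : ℕ, |cEig n b - cEig n b'| / (1 + n)) := by
  refine ⟨⟨13, by norm_num, fun b hb b' hb' n ↦
    abs_cEig_sub_div_le n (Ioo_subset_Ioc_self hb) (Ioo_subset_Ioc_self hb')⟩,
    fun b₀ hb₀ k₀ hk₀ _ ↦ ⟨fun k _ ↦ ?_, ?_⟩, ?_⟩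
  · have h_step : 0 < 1 / ((k₀ : ℝ) + k) := by positivity
    exact eLpNorm_top_stepPot_sub (by linarith [hb₀.1]) (by linarith)
  · exact (tendsto_dnDist_nhds hb₀).comp (tendsto_add_one_div_add_natCast b₀ k₀)
  · rintro ⟨V, hV, hV₀, h_stab⟩
    have h_half : (1 / 2 : ℝ) ∈ Ioo (0 : ℝ) 1 := by norm_num
    obtain ⟨b, hb, hne, hlt⟩ :=
      exists_ne_comp_dnDist_lt h_half hV.continuousAt (hV₀.trans_lt one_pos)
    exact hlt.not_ge (h_stab b hb _ h_half hne)
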